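/- Let S ⊆ [n]² be admissible, Ā ∈ M_S with ‖Ā‖_max ≤ 1, σ > 0, and let A ~ N_S(Ā, σ²Id). Then for every real t > 2|S|, Prob{ c†(A) > t } ≤ ((1 + σ)/σ)·(4n²|S|²/(t − 2|S|))·√(2/π), where c†(A) = max_{k,l ∈ [n]} c†_{kl}(A) and c†_{kl}(A) is the componentwise condition number of the map A ↦ (A⁻¹)_{kl} at A (A is almost surely invertible). -/

import Mathlib

open MeasureTheory ProbabilityTheory
open scoped ENNReal

/-- Componentwise "distance" `d(u,v) = ‖(u−v)/v‖_∞`, valued in `[0,∞]`: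
the `i`-th component of the quotient is `|u i − v i|/|v i|` if `v i ≠ 0`,
`0` if `u i = v i = 0`, and `∞` otherwise. -/
noncomputable def cwDist {ι : Type*} (u v : ι → ℝ) : ℝ≥0∞ :=
  ⨆ i, if v i ≠ 0 then ENNReal.ofReal (|u i - v i| / |v i|)
       else if u i = v i then 0 else ⊤

/-- Componentwise condition number of `F : D ⊆ ℝ^ι → ℝ^κ` at `a`:
`c^F(a) = lim_{δ→0} sup { d(F x, F a)/d(x,a) : x ∈ D, d(x,a) ≤ δ, x ≠ a }`,
the limit being an infimum since the sup is monotone in `δ`. -/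
noncomputable def cwCond {ι κ : Type*} (D : Set (ι → ℝ)) (F : (ι → ℝ) → κ → ℝ)
    (a : ι → ℝ) : ℝ≥0∞ :=
  ⨅ δ ∈ Set.Ioi (0 : ℝ≥0∞),
    ⨆ x ∈ {x ∈ D | cwDist x a ≤ δ ∧ x ≠ a}, cwDist (F x) (F a) / cwDist x a

/-- A matrix viewed as a point of `ℝ^(n×n)`. -/
def matToFun {n : ℕ} (A : Matrix (Fin n) (Fin n) ℝ) : Fin n × Fin n → ℝ :=
  fun p => A p.1 p.2

/-- A point of `ℝ^(n×n)` viewed as a matrix. -/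
def funToMat {n : ℕ} (x : Fin n × Fin n → ℝ) : Matrix (Fin n) (Fin n) ℝ :=
  Matrix.of fun i j => x (i, j)

/-- The componentwise condition number `c^det(A)` of determinant computation at `A`. -/
noncomputable def cDet {n : ℕ} (A : Matrix (Fin n) (Fin n) ℝ) : ℝ≥0∞ :=
  cwCond Set.univ (fun x (_ : Unit) => (funToMat x).det) (matToFun A)

/-- The componentwise condition number `c†_{kl}(A)` of the map `A ↦ (A⁻¹)_{kl}` at `A`. -/
noncomputable def cInv {n : ℕ} (k l : Fin n) (A : Matrix (Fin n) (Fin n) ℝ) : ℝ≥0∞ :=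
  cwCond {x | IsUnit (funToMat x).det}
    (fun x (_ : Unit) => (funToMat x)⁻¹ k l) (matToFun A)

/-- `c†(A) = max_{k,l} c†_{kl}(A)`. -/
noncomputable def cInvMax {n : ℕ} (A : Matrix (Fin n) (Fin n) ℝ) : ℝ≥0∞ :=
  ⨆ k, ⨆ l, cInv k l A

/-- A pair (matrix, right-hand side) viewed as a point of `ℝ^(n×n+n)`. -/
def pairToFun {n : ℕ} (A : Matrix (Fin n) (Fin n) ℝ) (b : Fin n → ℝ) :
    (Fin n × Fin n) ⊕ Fin n → ℝ :=
  Sum.elim (fun p => A p.1 p.2) b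

def funToMat' {n : ℕ} (x : (Fin n × Fin n) ⊕ Fin n → ℝ) : Matrix (Fin n) (Fin n) ℝ :=
  Matrix.of fun i j => x (Sum.inl (i, j))

def funToVec {n : ℕ} (x : (Fin n × Fin n) ⊕ Fin n → ℝ) : Fin n → ℝ :=
  fun i => x (Sum.inr i)

/-- The componentwise condition number `c_k(A,b)` of the map `(A,b) ↦ (A⁻¹b)_k` at `(A,b)`. -/
noncomputable def cLin {n : ℕ} (k : Fin n) (A : Matrix (Fin n) (Fin n) ℝ)
    (b : Fin n → ℝ) : ℝ≥0∞ :=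
  cwCond {x | IsUnit (funToMat' x).det}
    (fun x (_ : Unit) => (Matrix.mulVec (funToMat' x)⁻¹ (funToVec x)) k) (pairToFun A b)

/-- `c(A,b) = max_k c_k(A,b)`. -/
noncomputable def cLinMax {n : ℕ} (A : Matrix (Fin n) (Fin n) ℝ) (b : Fin n → ℝ) : ℝ≥0∞ :=
  ⨆ k, cLin k A b

instance matrixMeasurableSpace {n : ℕ} : MeasurableSpace (Matrix (Fin n) (Fin n) ℝ) :=
  inferInstanceAs (MeasurableSpace (Fin n → Fin n → ℝ))

/-- The distribution `N_S(Ā, σ²Id)` of a random sparse matrix: the entries `a_{ij}` with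
`(i,j) ∈ S` are independent Gaussians `N(ā_{ij}, σ²)`, and `a_{ij} = 0` for `(i,j) ∉ S`. -/
noncomputable def sparseGaussian {n : ℕ} (S : Finset (Fin n × Fin n))
    (Abar : Matrix (Fin n) (Fin n) ℝ) (σ : ℝ) : Measure (Matrix (Fin n) (Fin n) ℝ) :=
  (Measure.pi fun p : S => gaussianReal (Abar p.1.1 p.1.2) ⟨σ ^ 2, sq_nonneg σ⟩).map
    fun g => Matrix.of fun i j => if h : (i, j) ∈ S then g ⟨(i, j), h⟩ else 0

/-- The distribution `N(b̄, σ²Id)` on `ℝⁿ`: independent Gaussian entries `N(b̄_i, σ²)`. -/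
noncomputable def vecGaussian {n : ℕ} (bbar : Fin n → ℝ) (σ : ℝ) : Measure (Fin n → ℝ) :=
  Measure.pi fun i => gaussianReal (bbar i) ⟨σ ^ 2, sq_nonneg σ⟩

/-- `S ⊆ [n]²` is admissible when `M_S` contains an invertible matrix. -/
def Admissible {n : ℕ} (S : Finset (Fin n × Fin n)) : Prop :=
  ∃ B : Matrix (Fin n) (Fin n) ℝ, (∀ i j, (i, j) ∉ S → B i j = 0) ∧ IsUnit B.det

/-!
By Cramer's rule `(A⁻¹)_{kl} = P / Q` with `P = (adj A)_{kl}` and `Q = det A`, which are affine in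
each entry of `A`. Where `P` and `Q` do not vanish, `c†_{kl}(A)` is therefore at most the sum over
`p ∈ S` of `|a_p ∂_p P / P| + |a_p ∂_p Q / Q|`, so `c†_{kl}(A) ≤ 2|S|s` unless one of these
logarithmic derivatives exceeds `s`.

When all entries but the `p`-th are fixed, an affine function `h` of `y = a_p` with root `c` has
logarithmic derivative `y / (y - c)`. It exceeds `s > 1` in absolute value only for `y` in an
interval of length `2|c|s / (s² - 1)` on which `|y| ≥ |c|s / (s + 1)`. If `y` has a density `f` with
`|y| f(y) ≤ K`, this event has probability at most `2K / (s - 1)`. A union bound over the entries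
`p ∈ S` and over `det` and the `n²` cofactors finishes the proof, with `s = t / (2|S|)`: almost
surely each of these functions is nonzero, unless it is a cofactor vanishing identically on `M_S`,
and then `c†_{kl}` is zero.
-/

open Function Filter
open scoped Topology NNReal

/-! ### Condition numbers of differentiable functions -/

section ConditionNumber

variable {ι κ : Type*}

lemma abs_sub_le_abs_mul_cwDist {u v : ι → ℝ} (huv : cwDist u v ≠ ⊤) (i : ι) :
    |u i - v i| ≤ |v i| * (cwDist u v).toReal := by
  have hle : (if v i ≠ 0 then ENNReal.ofReal (|u i - v i| / |v i|)
      else if u i = v i then 0 else ⊤) ≤ cwDist u v :=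
    le_iSup (fun i ↦ if v i ≠ 0 then ENNReal.ofReal (|u i - v i| / |v i|)
      else if u i = v i then 0 else ⊤) i
  by_cases hvi : v i = 0
  · have hui : u i = v i := by
      by_contra hne
      exact huv (top_unique (by simpa [hvi, hvi ▸ hne] using hle))
    simp [hui, hvi]
  · rwa [if_pos hvi, ENNReal.ofReal_le_iff_le_toReal huv, div_le_iff₀' (abs_pos.2 hvi)] at hle

lemma cwCond_eq_zero {D : Set (ι → ℝ)} {F : (ι → ℝ) → κ → ℝ} {a : ι → ℝ}
    (hF : ∀ x, cwDist x a ≠ ⊤ → F x = F a) : cwCond D F a = 0 := by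
  refine nonpos_iff_eq_zero.1 ((iInf₂_le 1 one_pos).trans (iSup₂_le ?_))
  rintro x ⟨-, hx, -⟩
  simp [hF x (ne_top_of_le_ne_top ENNReal.one_ne_top hx), cwDist]

lemma norm_sub_le_norm_mul_cwDist [Fintype ι] {u v : ι → ℝ} (huv : cwDist u v ≠ ⊤) :
    ‖u - v‖ ≤ ‖v‖ * (cwDist u v).toReal := by
  refine (pi_norm_le_iff_of_nonneg (by positivity)).2 fun i ↦ ?_
  exact (abs_sub_le_abs_mul_cwDist huv i).trans (by gcongr; exact norm_le_pi_norm v i)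

lemma exists_cwDist_le_imp_mem [Finite ι] {a : ι → ℝ} {U : Set (ι → ℝ)} (hU : U ∈ 𝓝 a) :
    ∃ δ : ℝ, 0 < δ ∧ ∀ x, cwDist x a ≤ ENNReal.ofReal δ → x ∈ U := by
  cases nonempty_fintype ι
  obtain ⟨ε, hε, hball⟩ := Metric.mem_nhds_iff.1 hU
  refine ⟨ε / (‖a‖ + 1), by positivity, fun x hx ↦ hball ?_⟩
  rw [mem_ball_iff_norm]
  calc ‖x - a‖ ≤ ‖a‖ * (cwDist x a).toReal :=
        norm_sub_le_norm_mul_cwDist (ne_top_of_le_ne_top ENNReal.ofReal_ne_top hx)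
    _ ≤ ‖a‖ * (ε / (‖a‖ + 1)) := by
        gcongr
        exact ENNReal.toReal_le_of_le_ofReal (by positivity) hx
    _ < ε := by
        rw [mul_div_assoc', div_lt_iff₀ (by positivity)]
        linarith

lemma cwCond_le_of_eventually [Finite ι] {D : Set (ι → ℝ)} {F : (ι → ℝ) → ℝ} {a : ι → ℝ}
    (ha : F a ≠ 0) {L : ℝ} (hL : 0 ≤ L)
    (hF : ∀ᶠ x in 𝓝 a, cwDist x a ≠ ⊤ → |F x - F a| ≤ L * (cwDist x a).toReal * |F a|) :
    cwCond D (fun x (_ : κ) ↦ F x) a ≤ ENNReal.ofReal L := by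
  obtain ⟨δ, hδ, hnear⟩ := exists_cwDist_le_imp_mem hF
  refine (iInf₂_le (ENNReal.ofReal δ) (ENNReal.ofReal_pos.2 hδ)).trans (iSup₂_le ?_)
  rintro x ⟨-, hx, -⟩
  have hfin := ne_top_of_le_ne_top ENNReal.ofReal_ne_top hx
  refine ENNReal.div_le_of_le_mul (iSup_le fun _ ↦ ?_)
  rw [if_pos ha, ← ENNReal.ofReal_toReal hfin, ← ENNReal.ofReal_mul hL]
  refine ENNReal.ofReal_le_ofReal ((div_le_iff₀ (abs_pos.2 ha)).2 ?_)
  exact hnear x hx hfin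

variable [Fintype ι] [DecidableEq ι]

lemma abs_apply_sub_le_sum_mul_cwDist (f : (ι → ℝ) →L[ℝ] ℝ) {u v : ι → ℝ}
    (huv : cwDist u v ≠ ⊤) :
    |f (u - v)| ≤ (∑ p, |v p * f (Pi.single p 1)|) * (cwDist u v).toReal := by
  have hexp : f (u - v) = ∑ p, (u p - v p) * f (Pi.single p 1) := by
    conv_lhs => rw [pi_eq_sum_univ' (u - v), map_sum]
    simp
  rw [hexp, Finset.sum_mul]
  refine (Finset.abs_sum_le_sum_abs _ _).trans (Finset.sum_le_sum fun p _ ↦ ?_)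
  rw [abs_mul, abs_mul, mul_right_comm]
  gcongr
  exact abs_sub_le_abs_mul_cwDist huv p

theorem cwCond_le_of_hasFDerivAt {D : Set (ι → ℝ)} {F : (ι → ℝ) → ℝ} {F' : (ι → ℝ) →L[ℝ] ℝ}
    {a : ι → ℝ} (hF : HasFDerivAt F F' a) (ha : F a ≠ 0) :
    cwCond D (fun x (_ : κ) ↦ F x) a
      ≤ ENNReal.ofReal (∑ p, |a p * F' (Pi.single p 1) / F a|) := by
  refine ENNReal.le_of_forall_pos_le_add fun η hη _ ↦ ?_
  rw [← ENNReal.ofReal_coe_nnreal, ← ENNReal.ofReal_add (by positivity) η.coe_nonneg]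
  have hFa : 0 < |F a| := abs_pos.2 ha
  refine cwCond_le_of_eventually ha (by positivity) ?_
  have hη' : 0 < η * |F a| / (‖a‖ + 1) := by positivity
  filter_upwards [hF.isLittleO.bound hη'] with x hx hfin
  rw [Real.norm_eq_abs] at hx
  have hrem : |F x - F a - F' (x - a)| ≤ η * |F a| * (cwDist x a).toReal :=
    calc |F x - F a - F' (x - a)| ≤ η * |F a| / (‖a‖ + 1) * ‖x - a‖ := hx
      _ ≤ η * |F a| / (‖a‖ + 1) * ((‖a‖ + 1) * (cwDist x a).toReal) := by
          gcongr
          refine (norm_sub_le_norm_mul_cwDist hfin).trans ?_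
          gcongr
          exact le_add_of_nonneg_right zero_le_one
      _ = η * |F a| * (cwDist x a).toReal := by field_simp
  have hsum : (∑ p, |a p * F' (Pi.single p 1) / F a|) * |F a|
      = ∑ p, |a p * F' (Pi.single p 1)| := by
    simp_rw [abs_div, ← Finset.sum_div]
    exact div_mul_cancel₀ _ hFa.ne'
  calc |F x - F a| = |F' (x - a) + (F x - F a - F' (x - a))| := by ring_nf
    _ ≤ (∑ p, |a p * F' (Pi.single p 1)|) * (cwDist x a).toReal
          + η * |F a| * (cwDist x a).toReal :=
        (abs_add_le _ _).trans (add_le_add (abs_apply_sub_le_sum_mul_cwDist F' hfin) hrem)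
    _ = (∑ p, |a p * F' (Pi.single p 1) / F a| + η) * (cwDist x a).toReal * |F a| := by
        rw [← hsum]
        ring

-- The logarithmic derivative of a quotient is the difference of the logarithmic derivatives.
theorem cwCond_div_le {D : Set (ι → ℝ)} {P Q : (ι → ℝ) → ℝ} {P' Q' : (ι → ℝ) →L[ℝ] ℝ}
    {a : ι → ℝ} (hP : HasFDerivAt P P' a) (hQ : HasFDerivAt Q Q' a) (hPa : P a ≠ 0)
    (hQa : Q a ≠ 0) :
    cwCond D (fun x (_ : κ) ↦ P x / Q x) a ≤ ENNReal.ofReal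
      (∑ p, (|a p * P' (Pi.single p 1) / P a| + |a p * Q' (Pi.single p 1) / Q a|)) := by
  have hinv : HasFDerivAt (fun x ↦ (Q x)⁻¹) (-(Q a ^ 2)⁻¹ • Q') a :=
    (hasDerivAt_inv hQa).comp_hasFDerivAt a hQ
  have hdiv : HasFDerivAt (fun x ↦ P x / Q x)
      (P a • (-(Q a ^ 2)⁻¹ • Q') + (Q a)⁻¹ • P') a := by
    simpa only [div_eq_mul_inv] using hP.fun_mul hinv
  refine (cwCond_le_of_hasFDerivAt hdiv (div_ne_zero hPa hQa)).trans ?_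
  refine ENNReal.ofReal_le_ofReal (Finset.sum_le_sum fun p _ ↦ ?_)
  refine (le_of_eq ?_).trans (abs_sub (a p * P' (Pi.single p 1) / P a) _)
  congr 1
  simp only [add_apply, smul_apply, smul_eq_mul]
  field_simp
  ring

end ConditionNumber

/-! ### Multiaffine functions -/

section Multiaffine

variable {ι κ R : Type*} [DecidableEq ι] [DecidableEq κ] [CommRing R]

/-- Functions on `R^ι` which are affine in each coordinate separately, such as the determinant
as a function of the matrix entries. -/
def IsMultiaffine (h : (ι → R) → R) : Prop :=
  ∀ x p, ∃ c, ∀ y, h (update x p y) = h x + (y - x p) * c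

/-- The `p`-th partial derivative of a multiaffine function, encoded as the increment over
`[0, 1]` so that it makes sense over every ring. -/
def coordSlope (h : (ι → R) → R) (p : ι) (x : ι → R) : R :=
  h (update x p 1) - h (update x p 0)

@[simp]
lemma coordSlope_update (h : (ι → R) → R) (p : ι) (x : ι → R) (y : R) :
    coordSlope h p (update x p y) = coordSlope h p x := by
  simp [coordSlope]

lemma extend_update {α β γ : Type*} [DecidableEq α] [DecidableEq β] {e : α → β}
    (he : Injective e) (x : α → γ) (c : β → γ) (p : α) (y : γ) :
    extend e (update x p y) c = update (extend e x c) (e p) y := by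
  ext b
  by_cases hb : ∃ a, e a = b
  · obtain ⟨a, rfl⟩ := hb
    simp [he.extend_apply, update_apply, he.eq_iff]
  · rw [extend_apply' _ _ _ hb, update_of_ne fun hbp ↦ hb ⟨p, hbp.symm⟩, extend_apply' _ _ _ hb]

lemma coordSlope_comp_extend (h : (ι → R) → R) {e : κ → ι} (he : Injective e) (c : ι → R) (p : κ)
    (x : κ → R) :
    coordSlope (fun x ↦ h (extend e x c)) p x = coordSlope h (e p) (extend e x c) := by
  simp only [coordSlope, extend_update he]

namespace IsMultiaffine

variable {h h₁ h₂ : (ι → R) → R}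

lemma apply_update (hh : IsMultiaffine h) (x : ι → R) (p : ι) (y : R) :
    h (update x p y) = h x + (y - x p) * coordSlope h p x := by
  obtain ⟨c, hc⟩ := hh x p
  rw [coordSlope, hc, hc, hc]
  ring

protected lemma sub (hh₁ : IsMultiaffine h₁) (hh₂ : IsMultiaffine h₂) :
    IsMultiaffine fun x ↦ h₁ x - h₂ x := fun x p ↦
  ⟨coordSlope h₁ p x - coordSlope h₂ p x, fun y ↦ by
    simp only [hh₁.apply_update, hh₂.apply_update]
    ring⟩

lemma comp_piecewise (hh : IsMultiaffine h) (T : Finset ι) (c : ι → R) :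
    IsMultiaffine fun x ↦ h (T.piecewise c x) := by
  intro x p
  by_cases hp : p ∈ T
  · refine ⟨0, fun y ↦ ?_⟩
    have hfrozen : T.piecewise c (update x p y) = T.piecewise c x :=
      T.piecewise_congr (fun _ _ ↦ rfl) fun q hq ↦
        update_of_ne (ne_of_mem_of_not_mem hp hq).symm _ _
    simp only [hfrozen, mul_zero, add_zero]
  · refine ⟨coordSlope h p (T.piecewise c x), fun y ↦ ?_⟩
    simp only [← Finset.update_piecewise_of_notMem T c x hp, hh.apply_update,
      Finset.piecewise_eq_of_notMem T c x hp]

lemma comp_extend (hh : IsMultiaffine h) {e : κ → ι} (he : Injective e) (c : ι → R) :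
    IsMultiaffine fun x : κ → R ↦ h (extend e x c) := fun x p ↦
  ⟨coordSlope h (e p) (extend e x c), fun y ↦ by
    simp only [extend_update he, hh.apply_update, he.extend_apply]⟩

protected lemma coordSlope (hh : IsMultiaffine h) (p : ι) : IsMultiaffine (coordSlope h p) := by
  have hupdate (y : R) : IsMultiaffine fun x ↦ h (update x p y) := by
    simpa only [Finset.piecewise_singleton, update_self]
      using hh.comp_piecewise {p} fun _ ↦ y
  exact (hupdate 1).sub (hupdate 0)

end IsMultiaffine

variable {m : Type*} [DecidableEq m]

lemma of_update_eq_updateRow (x : m × m → R) (p : m × m) (y : R) :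
    (Matrix.of fun i j ↦ update x p y (i, j)) = (Matrix.of fun i j ↦ x (i, j)).updateRow p.1
      ((fun j ↦ x (p.1, j)) + (y - x p) • Pi.single p.2 1) := by
  ext i j
  by_cases hi : i = p.1
  · by_cases hj : j = p.2
    · subst hi hj
      simp
    · subst hi
      simp [hj, update_apply, Prod.ext_iff]
  · simp [hi, update_apply, Prod.ext_iff]

theorem isMultiaffine_det [Fintype m] :
    IsMultiaffine fun x : m × m → R ↦ (Matrix.of fun i j ↦ x (i, j)).det := by
  refine fun x p ↦
    ⟨((Matrix.of fun i j ↦ x (i, j)).updateRow p.1 (Pi.single p.2 1)).det, fun y ↦ ?_⟩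
  simp only [of_update_eq_updateRow, Matrix.det_updateRow_add, Matrix.det_updateRow_smul]
  congr 2
  exact Matrix.updateRow_eq_self _ _

theorem isMultiaffine_adjugate [Fintype m] (k l : m) :
    IsMultiaffine fun x : m × m → R ↦ (Matrix.of fun i j ↦ x (i, j)).adjugate k l := by
  have hcofactor (x : m × m → R) : (Matrix.of fun i j ↦ x (i, j)).adjugate k l
      = (Matrix.of fun i j ↦ ({p | p.1 = l} : Finset (m × m)).piecewise
          (fun p ↦ (Pi.single k 1 : m → R) p.2) x (i, j)).det := by
    rw [Matrix.adjugate_apply]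
    congr 1
    ext i j
    by_cases hi : i = l
    · subst hi
      simp [Finset.piecewise]
    · simp [Finset.piecewise, hi]
  simp_rw [hcofactor]
  exact isMultiaffine_det.comp_piecewise _ _

end Multiaffine

section RealMultiaffine

variable {ι κ : Type*} [DecidableEq ι] {h : (ι → ℝ) → ℝ}

theorem IsMultiaffine.differentiable [Finite ι] (hh : IsMultiaffine h) : Differentiable ℝ h := by
  cases nonempty_fintype ι
  suffices hT : ∀ (T : Finset ι) (z : ι → ℝ), Differentiable ℝ fun x ↦ h (T.piecewise x z) by
    simpa using hT Finset.univ 0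
  intro T z
  induction T using Finset.induction generalizing h with
  | empty => simp
  | insert p T hp ih =>
    have hsplit (x : ι → ℝ) : h ((insert p T).piecewise x z)
        = h (T.piecewise x z) + (x p - z p) * coordSlope h p (T.piecewise x z) := by
      rw [Finset.piecewise_insert, hh.apply_update, Finset.piecewise_eq_of_notMem _ _ _ hp]
    simp_rw [hsplit]
    exact (ih hh).fun_add (((differentiable_apply p).sub_const _).fun_mul (ih (hh.coordSlope p)))

lemma IsMultiaffine.apply_single_eq_coordSlope [Finite ι] (hh : IsMultiaffine h)
    {h' : (ι → ℝ) →L[ℝ] ℝ} {x : ι → ℝ} (hx : HasFDerivAt h h' x) (p : ι) :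
    h' (Pi.single p 1) = coordSlope h p x := by
  cases nonempty_fintype ι
  have hline : HasDerivAt (fun y ↦ h (update x p y)) (h' (Pi.single p 1)) (x p) := by
    rw [← update_eq_self p x] at hx
    exact hx.comp_hasDerivAt (x p) (hasDerivAt_update x p (x p))
  refine hline.unique ?_
  simp_rw [hh.apply_update]
  simpa using (((hasDerivAt_id (x p)).sub_const (x p)).mul_const (coordSlope h p x)).const_add (h x)

/-- The points at which some logarithmic partial derivative `x p * ∂ₚh x / h x` of the multiaffine
function `h` exceeds `s` in absolute value. Clearing the denominator makes sense of this at the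
zeros of `h` too. -/
def steepSet (h : (ι → ℝ) → ℝ) (s : ℝ) : Set (ι → ℝ) :=
  {x | ∃ p, s * |h x| < |x p * coordSlope h p x|}

lemma mem_steepSet_comp_extend [DecidableEq κ] {e : κ → ι} (he : Injective e) {s : ℝ}
    (hs : 0 ≤ s) {x : κ → ℝ} (hx : Function.extend e x 0 ∈ steepSet h s) :
    x ∈ steepSet (fun x ↦ h (Function.extend e x 0)) s := by
  obtain ⟨q, hq⟩ := hx
  by_cases hqe : ∃ p, e p = q
  · obtain ⟨p, rfl⟩ := hqe
    refine ⟨p, ?_⟩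
    rwa [coordSlope_comp_extend h he, ← he.extend_apply x 0 p]
  · rw [extend_apply' _ _ _ hqe, Pi.zero_apply, zero_mul, abs_zero] at hq
    exact absurd hq (by positivity : 0 ≤ s * _).not_gt

lemma IsMultiaffine.abs_mul_apply_single_div_le [Finite ι] (hh : IsMultiaffine h)
    {h' : (ι → ℝ) →L[ℝ] ℝ} {a : ι → ℝ} (ha : HasFDerivAt h h' a) (hha : h a ≠ 0) {s : ℝ}
    (hsteep : a ∉ steepSet h s) (p : ι) : |a p * h' (Pi.single p 1) / h a| ≤ s := by
  rw [abs_div, div_le_iff₀ (abs_pos.2 hha), hh.apply_single_eq_coordSlope ha]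
  exact not_lt.1 fun hlt ↦ hsteep ⟨p, hlt⟩

protected theorem IsMultiaffine.cwCond_div_le [Finite ι] {D : Set (ι → ℝ)} {P Q : (ι → ℝ) → ℝ}
    (hP : IsMultiaffine P) (hQ : IsMultiaffine Q) {a : ι → ℝ} {S : Finset ι}
    (ha : ∀ p ∉ S, a p = 0) (hPa : P a ≠ 0) (hQa : Q a ≠ 0) {s : ℝ}
    (hPs : a ∉ steepSet P s) (hQs : a ∉ steepSet Q s) :
    cwCond D (fun x (_ : κ) ↦ P x / Q x) a ≤ ENNReal.ofReal (S.card * (2 * s)) := by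
  cases nonempty_fintype ι
  have hP' := (hP.differentiable a).hasFDerivAt
  have hQ' := (hQ.differentiable a).hasFDerivAt
  refine (cwCond_div_le hP' hQ' hPa hQa).trans (ENNReal.ofReal_le_ofReal ?_)
  rw [← Finset.sum_subset S.subset_univ fun p _ hp ↦ by simp [ha p hp], ← nsmul_eq_mul]
  refine Finset.sum_le_card_nsmul _ _ _ fun p _ ↦ ?_
  rw [two_mul]
  exact add_le_add (hP.abs_mul_apply_single_div_le hP' hPa hPs p)
    (hQ.abs_mul_apply_single_div_le hQ' hQa hQs p)

end RealMultiaffine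

/-! ### Fibrewise estimates in product measures -/

section ProductMeasure

variable {ι : Type*} [Fintype ι] [DecidableEq ι] {α : ι → Type*} [∀ i, MeasurableSpace (α i)]
  {μ : ∀ i, Measure (α i)} [∀ i, IsProbabilityMeasure (μ i)]

lemma measure_pi_eq_lintegral_update {E : Set (∀ i, α i)} (hE : MeasurableSet E) (p : ι) :
    Measure.pi μ E = ∫⁻ x, μ p (update x p ⁻¹' E) ∂Measure.pi μ := by
  have hfibre : (∫⋯∫⁻_{p}, E.indicator 1 ∂μ) = fun x ↦ μ p (update x p ⁻¹' E) := by
    ext x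
    rw [lmarginal_singleton, ← lintegral_indicator_one ((measurable_update x) hE)]
    rfl
  have hmeas : Measurable (E.indicator (1 : (∀ i, α i) → ℝ≥0∞)) := measurable_one.indicator hE
  rw [← lintegral_indicator_one hE, ← hfibre]
  refine lintegral_eq_of_lmarginal_eq {p} hmeas (hmeas.lmarginal μ) ?_
  ext x
  rw [lmarginal_singleton (lmarginal _ _ _)]
  simp [lmarginal_update_of_mem]

lemma measure_pi_le_of_forall_fibre_le {E : Set (∀ i, α i)} (hE : MeasurableSet E) (p : ι)
    {b : ℝ≥0∞} (hb : ∀ x, μ p (update x p ⁻¹' E) ≤ b) : Measure.pi μ E ≤ b := by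
  rw [measure_pi_eq_lintegral_update hE p]
  exact (lintegral_mono hb).trans_eq (by simp)

lemma ae_pi_of_ae_update {q : (∀ i, α i) → Prop} (hq : MeasurableSet {x | q x}) (p : ι)
    (h : ∀ᵐ x ∂Measure.pi μ, ∀ᵐ y ∂μ p, q (update x p y)) : ∀ᵐ x ∂Measure.pi μ, q x := by
  rw [ae_iff]
  exact (measure_pi_eq_lintegral_update hq.compl p).trans
    ((lintegral_congr_ae h).trans lintegral_zero)

end ProductMeasure

section MultiaffineMeasure

variable {ι : Type*} [DecidableEq ι] {h : (ι → ℝ) → ℝ}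

lemma IsMultiaffine.measurable [Finite ι] (hh : IsMultiaffine h) : Measurable h := by
  cases nonempty_fintype ι
  exact hh.differentiable.continuous.measurable

lemma IsMultiaffine.measurableSet_lt_abs_mul_coordSlope [Finite ι] (hh : IsMultiaffine h)
    (s : ℝ) (p : ι) :
    MeasurableSet {x | s * |h x| < |x p * coordSlope h p x|} := by
  have hmeas := hh.measurable
  have hslope := (hh.coordSlope p).measurable
  exact measurableSet_lt (by fun_prop) (by fun_prop)

variable [Fintype ι] {μ : ι → Measure ℝ} [∀ i, IsProbabilityMeasure (μ i)]

theorem IsMultiaffine.ae_ne_zero [∀ i, NullSingletonClass (μ i)] (hh : IsMultiaffine h) {z : ι → ℝ}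
    (hz : h z ≠ 0) : ∀ᵐ x ∂Measure.pi μ, h x ≠ 0 := by
  suffices hT : ∀ T : Finset ι, ∀ᵐ x ∂Measure.pi μ, h (T.piecewise x z) ≠ 0 by
    simpa using hT Finset.univ
  intro T
  induction T using Finset.induction with
  | empty => simp [hz]
  | insert p T hp ih =>
    have hmeas : Measurable fun x ↦ h ((insert p T).piecewise x z) := by
      have hcompl := (hh.comp_piecewise (insert p T)ᶜ z).measurable
      simpa only [Finset.piecewise_compl] using hcompl
    refine ae_pi_of_ae_update (hmeas (measurableSet_singleton 0).compl) p ?_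
    filter_upwards [ih] with x hx
    have hline (y : ℝ) : h ((insert p T).piecewise (update x p y) z)
        = h (T.piecewise x z) + (y - z p) * coordSlope h p (T.piecewise x z) := by
      have hfrozen : T.piecewise (update x p y) z = T.piecewise x z :=
        T.piecewise_congr (fun q hq ↦ update_of_ne (ne_of_mem_of_not_mem hq hp) _ _) fun _ _ ↦ rfl
      rw [Finset.piecewise_insert, hh.apply_update, hfrozen, update_self,
        Finset.piecewise_eq_of_notMem _ _ _ hp]
    have hroots : {y | h ((insert p T).piecewise (update x p y) z) = 0}.Subsingleton := by
      intro y hy y' hy'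
      rw [Set.mem_ofPred_eq, hline] at hy hy'
      have hslope : coordSlope h p (T.piecewise x z) ≠ 0 := by
        intro hzero
        rw [hzero, mul_zero, add_zero] at hy
        exact hx hy
      refine mul_right_cancel₀ hslope ?_
      linear_combination hy - hy'
    simpa [ae_iff] using hroots.measure_zero (μ p)

lemma IsMultiaffine.measure_lt_abs_mul_coordSlope_le (hh : IsMultiaffine h) {s : ℝ} (hs : 0 ≤ s)
    {p : ι} {b : ℝ≥0∞} (hb : ∀ c, μ p {y | s * |y - c| < |y|} ≤ b) :
    Measure.pi μ {x | s * |h x| < |x p * coordSlope h p x|} ≤ b := by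
  refine measure_pi_le_of_forall_fibre_le (hh.measurableSet_lt_abs_mul_coordSlope s p) p fun x ↦ ?_
  refine (measure_mono fun y hy ↦ ?_).trans (hb (x p - h x / coordSlope h p x))
  simp only [Set.mem_preimage, Set.mem_ofPred_eq, coordSlope_update, hh.apply_update,
    update_self] at hy ⊢
  have hslope : coordSlope h p x ≠ 0 := by
    intro hzero
    rw [hzero, mul_zero, mul_zero, abs_zero] at hy
    exact absurd hy (by positivity : 0 ≤ s * _).not_gt
  have hroot : h x + (y - x p) * coordSlope h p x
      = (y - (x p - h x / coordSlope h p x)) * coordSlope h p x := by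
    field_simp
    ring
  rw [hroot, abs_mul, abs_mul, ← mul_assoc] at hy
  exact lt_of_mul_lt_mul_right hy (abs_nonneg _)

theorem IsMultiaffine.measure_steepSet_le (hh : IsMultiaffine h) {s : ℝ} (hs : 0 ≤ s) {b : ℝ≥0∞}
    (hb : ∀ p c, μ p {y | s * |y - c| < |y|} ≤ b) :
    Measure.pi μ (steepSet h s) ≤ Fintype.card ι * b := by
  have hunion : steepSet h s = ⋃ p, {x | s * |h x| < |x p * coordSlope h p x|} := by
    ext x
    simp [steepSet]
  rw [hunion, ← nsmul_eq_mul]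
  exact (measure_iUnion_fintype_le _ _).trans
    (Finset.sum_le_card_nsmul _ _ _ fun p _ ↦ hh.measure_lt_abs_mul_coordSlope_le hs (hb p))

end MultiaffineMeasure

/-! ### Relative anticoncentration on the line -/

section Anticoncentration

variable {s c y : ℝ}

-- Squaring turns the condition into the interior of an Apollonius ball.
lemma mem_ball_of_mul_abs_sub_lt_abs (hs : 1 < s) (hy : s * |y - c| < |y|) :
    y ∈ Metric.ball (c * (s ^ 2 / (s ^ 2 - 1))) (|c| * (s / (s ^ 2 - 1))) := by
  have hden : 0 < s ^ 2 - 1 := by nlinarith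
  rw [Metric.mem_ball, Real.dist_eq]
  refine abs_lt_of_sq_lt_sq ?_ (by positivity)
  have hsq : s ^ 2 * (y - c) ^ 2 < y ^ 2 := by
    simpa only [mul_pow, sq_abs] using pow_lt_pow_left₀ hy (by positivity) two_ne_zero
  have hcenter : (y - c * (s ^ 2 / (s ^ 2 - 1))) ^ 2
      = (y * (s ^ 2 - 1) - c * s ^ 2) ^ 2 / (s ^ 2 - 1) ^ 2 := by field_simp
  have hradius : (|c| * (s / (s ^ 2 - 1))) ^ 2 = (c * s) ^ 2 / (s ^ 2 - 1) ^ 2 := by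
    rw [mul_pow, sq_abs]
    field_simp
  rw [hcenter, hradius]
  refine div_lt_div_of_pos_right ?_ (by positivity)
  nlinarith

lemma abs_mul_le_of_mul_abs_sub_lt_abs (hs : 0 ≤ s) (hy : s * |y - c| < |y|) :
    |c| * s ≤ |y| * (s + 1) := by
  have htri : |c| ≤ |y| + |y - c| := by simpa using abs_sub y (y - c)
  nlinarith

theorem withDensity_mul_abs_sub_lt_abs_le (hs : 1 < s) {f : ℝ → ℝ≥0∞} {K : ℝ≥0∞}
    (hf : ∀ y, ‖y‖ₑ * f y ≤ K) (c : ℝ) :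
    volume.withDensity f {y | s * |y - c| < |y|} ≤ K * ENNReal.ofReal (2 / (s - 1)) := by
  have hs0 : 0 < s := one_pos.trans hs
  have hs1 : 0 < s - 1 := sub_pos.2 hs
  rcases eq_or_ne c 0 with rfl | hc
  · have hempty : {y : ℝ | s * |y - 0| < |y|} = ∅ := by
      refine Set.eq_empty_of_forall_notMem fun y hy ↦ ?_
      rw [Set.mem_ofPred_eq, sub_zero] at hy
      exact hy.not_ge (le_mul_of_one_le_left (abs_nonneg y) hs.le)
    rw [hempty, measure_empty]
    exact zero_le
  set r : ℝ := |c| * s / (s + 1) with hr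
  have hr0 : 0 < r := by positivity
  have hdensity {y : ℝ} (hy : s * |y - c| < |y|) : f y ≤ K / ENNReal.ofReal r := by
    rw [ENNReal.le_div_iff_mul_le (by simp [hr0]) (by simp), mul_comm]
    refine le_trans ?_ (hf y)
    rw [Real.enorm_eq_ofReal_abs]
    gcongr
    rw [hr, div_le_iff₀ (by positivity)]
    exact abs_mul_le_of_mul_abs_sub_lt_abs hs0.le hy
  have hmeas : MeasurableSet {y : ℝ | s * |y - c| < |y|} :=
    measurableSet_lt (by fun_prop) (by fun_prop)
  have hvolume : volume {y : ℝ | s * |y - c| < |y|}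
      ≤ ENNReal.ofReal (2 * (|c| * (s / (s ^ 2 - 1)))) := by
    rw [← Real.volume_ball (c * (s ^ 2 / (s ^ 2 - 1)))]
    exact measure_mono fun y ↦ mem_ball_of_mul_abs_sub_lt_abs hs
  calc volume.withDensity f {y | s * |y - c| < |y|}
      = ∫⁻ y in {y | s * |y - c| < |y|}, f y := withDensity_apply _ hmeas
    _ ≤ ∫⁻ _ in {y | s * |y - c| < |y|}, K / ENNReal.ofReal r :=
        setLIntegral_mono' hmeas fun _ ↦ hdensity
    _ ≤ K / ENNReal.ofReal r * ENNReal.ofReal (2 * (|c| * (s / (s ^ 2 - 1)))) := by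
        rw [setLIntegral_const]
        gcongr
    _ = K * ENNReal.ofReal (2 / (s - 1)) := by
        rw [ENNReal.div_eq_inv_mul, ← ENNReal.ofReal_inv_of_pos hr0, mul_comm (ENNReal.ofReal _),
          mul_assoc, ← ENNReal.ofReal_mul (by positivity), hr,
          show s ^ 2 - 1 = (s - 1) * (s + 1) by ring]
        congr 2
        field_simp

end Anticoncentration

section GaussianDensity

lemma mul_exp_neg_sq_half_le_one (z : ℝ) : z * Real.exp (-(z ^ 2 / 2)) ≤ 1 := by
  rw [Real.exp_neg, ← div_eq_mul_inv, div_le_one (Real.exp_pos _)]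
  nlinarith [Real.add_one_le_exp (z ^ 2 / 2), sq_nonneg (z - 1)]

lemma abs_mul_gaussianPDFReal_le (m : ℝ) (v : ℝ≥0) (y : ℝ) :
    |y| * gaussianPDFReal m v y ≤ (|m| + √v) / √v * (√(2 * Real.pi))⁻¹ := by
  rcases eq_or_ne v 0 with rfl | hv
  · simp
  have hσ : 0 < √(v : ℝ) := by positivity
  set z : ℝ := |y - m| / √v with hz
  have hy : |y| ≤ |m| + √v * z := by
    rw [hz, mul_div_cancel₀ _ hσ.ne', add_comm]
    simpa using abs_add_le (y - m) m
  have hexp : Real.exp (-(y - m) ^ 2 / (2 * v)) = Real.exp (-(z ^ 2 / 2)) := by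
    rw [hz, div_pow, sq_abs, Real.sq_sqrt v.coe_nonneg]
    congr 1
    field_simp
  have hmass : |y| * Real.exp (-(z ^ 2 / 2)) ≤ |m| + √v :=
    calc |y| * Real.exp (-(z ^ 2 / 2)) ≤ (|m| + √v * z) * Real.exp (-(z ^ 2 / 2)) := by gcongr
      _ = |m| * Real.exp (-(z ^ 2 / 2)) + √v * (z * Real.exp (-(z ^ 2 / 2))) := by ring
      _ ≤ |m| * 1 + √v * 1 := by
          gcongr
          · exact Real.exp_le_one_iff.2 (by linarith [sq_nonneg z])
          · exact mul_exp_neg_sq_half_le_one z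
      _ = |m| + √v := by ring
  calc |y| * gaussianPDFReal m v y
      = |y| * Real.exp (-(z ^ 2 / 2)) * ((√v)⁻¹ * (√(2 * Real.pi))⁻¹) := by
        rw [gaussianPDFReal, hexp, Real.sqrt_mul (by positivity), mul_inv]
        ring
    _ ≤ (|m| + √v) * ((√v)⁻¹ * (√(2 * Real.pi))⁻¹) := by gcongr
    _ = (|m| + √v) / √v * (√(2 * Real.pi))⁻¹ := by ring

lemma enorm_mul_gaussianPDF_le (m : ℝ) (v : ℝ≥0) (y : ℝ) :
    ‖y‖ₑ * gaussianPDF m v y ≤ ENNReal.ofReal ((|m| + √v) / √v * (√(2 * Real.pi))⁻¹) := by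
  rw [gaussianPDF, Real.enorm_eq_ofReal_abs, ← ENNReal.ofReal_mul (abs_nonneg y)]
  exact ENNReal.ofReal_le_ofReal (abs_mul_gaussianPDFReal_le m v y)

lemma sqrt_two_div_pi : √(2 / Real.pi) = 2 * (√(2 * Real.pi))⁻¹ := by
  rw [← Real.sqrt_inv, show 2 / Real.pi = 2 ^ 2 * (2 * Real.pi)⁻¹ by field_simp,
    Real.sqrt_mul (by positivity), Real.sqrt_sq zero_le_two]

end GaussianDensity

/-! ### Sparse random matrices -/

lemma matrix_inv_apply_eq_div {m K : Type*} [Fintype m] [DecidableEq m] [Field K]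
    (A : Matrix m m K) (k l : m) : A⁻¹ k l = A.adjugate k l / A.det := by
  rw [Matrix.inv_def, Matrix.smul_apply, Ring.inverse_eq_inv', smul_eq_mul, div_eq_inv_mul]

section SparseMatrix

variable {n : ℕ} {S : Finset (Fin n × Fin n)}

lemma cInv_eq_cwCond_adjugate_div_det (k l : Fin n) (A : Matrix (Fin n) (Fin n) ℝ) :
    cInv k l A = cwCond {x | IsUnit (funToMat x).det}
      (fun x (_ : Unit) ↦ (funToMat x).adjugate k l / (funToMat x).det) (matToFun A) := by
  simp only [cInv, matrix_inv_apply_eq_div]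

lemma cInv_le_of_notMem_steepSet {k l : Fin n} {A : Matrix (Fin n) (Fin n) ℝ}
    (hA : ∀ p ∉ S, matToFun A p = 0) (hadj : A.adjugate k l ≠ 0) (hdet : A.det ≠ 0) {s : ℝ}
    (hadj_steep : matToFun A ∉ steepSet (fun x ↦ (funToMat x).adjugate k l) s)
    (hdet_steep : matToFun A ∉ steepSet (fun x ↦ (funToMat x).det) s) :
    cInv k l A ≤ ENNReal.ofReal (S.card * (2 * s)) := by
  rw [cInv_eq_cwCond_adjugate_div_det]
  exact (isMultiaffine_adjugate k l).cwCond_div_le isMultiaffine_det hA hadj hdet hadj_steep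
    hdet_steep

/-- The matrix of `M_S` with entries `x` on `S`. -/
noncomputable def sparseMat (S : Finset (Fin n × Fin n)) (x : S → ℝ) :
    Matrix (Fin n) (Fin n) ℝ :=
  funToMat (Function.extend Subtype.val x 0)

lemma matToFun_sparseMat_coe (x : S → ℝ) (p : S) : matToFun (sparseMat S x) p = x p :=
  Subtype.val_injective.extend_apply x 0 p

lemma matToFun_sparseMat_of_notMem (x : S → ℝ) {p : Fin n × Fin n} (hp : p ∉ S) :
    matToFun (sparseMat S x) p = 0 :=
  extend_apply' x _ p fun ⟨q, hq⟩ ↦ hp (hq ▸ q.2)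

lemma sparseMat_eq_of_dite (S : Finset (Fin n × Fin n)) (x : S → ℝ) :
    sparseMat S x = Matrix.of fun i j ↦ if h : (i, j) ∈ S then x ⟨(i, j), h⟩ else 0 := by
  ext i j
  by_cases h : (i, j) ∈ S
  · rw [Matrix.of_apply, dif_pos h]
    exact matToFun_sparseMat_coe x ⟨(i, j), h⟩
  · rw [Matrix.of_apply, dif_neg h]
    exact matToFun_sparseMat_of_notMem x h

lemma sparseMat_restrict {A : Matrix (Fin n) (Fin n) ℝ} (hA : ∀ i j, (i, j) ∉ S → A i j = 0) :
    sparseMat S (fun p ↦ A p.1.1 p.1.2) = A := by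
  ext i j
  by_cases h : (i, j) ∈ S
  · simp [sparseMat_eq_of_dite, h]
  · simp [sparseMat_eq_of_dite, h, hA i j h]

lemma isMultiaffine_det_sparseMat (S : Finset (Fin n × Fin n)) :
    IsMultiaffine fun x ↦ (sparseMat S x).det :=
  isMultiaffine_det.comp_extend Subtype.val_injective 0

lemma isMultiaffine_adjugate_sparseMat (S : Finset (Fin n × Fin n)) (k l : Fin n) :
    IsMultiaffine fun x ↦ (sparseMat S x).adjugate k l :=
  (isMultiaffine_adjugate k l).comp_extend Subtype.val_injective 0

-- A point at finite componentwise distance from a matrix of `M_S` is itself a matrix of `M_S`.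
lemma cInv_sparseMat_eq_zero {k l : Fin n} (hadj : ∀ z, (sparseMat S z).adjugate k l = 0)
    (x : S → ℝ) : cInv k l (sparseMat S x) = 0 := by
  rw [cInv_eq_cwCond_adjugate_div_det]
  refine cwCond_eq_zero fun y hy ↦ funext fun _ ↦ ?_
  have hsupp (i j : Fin n) (hij : (i, j) ∉ S) : funToMat y i j = 0 := by
    have hdist := abs_sub_le_abs_mul_cwDist hy (i, j)
    rwa [matToFun_sparseMat_of_notMem x hij, sub_zero, abs_zero, zero_mul, abs_nonpos_iff] at hdist
  have hy0 : (funToMat y).adjugate k l = 0 := sparseMat_restrict hsupp ▸ hadj _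
  have hx0 : (funToMat (matToFun (sparseMat S x))).adjugate k l = 0 := hadj x
  rw [hy0, hx0, zero_div, zero_div]

lemma cInvMax_sparseMat_le {s : ℝ} (hs : 0 ≤ s) {x : S → ℝ} (hdet : (sparseMat S x).det ≠ 0)
    (hadj : ∀ k l, (∃ z, (sparseMat S z).adjugate k l ≠ 0) → (sparseMat S x).adjugate k l ≠ 0)
    (hdet_steep : x ∉ steepSet (fun x ↦ (sparseMat S x).det) s)
    (hadj_steep : ∀ k l, x ∉ steepSet (fun x ↦ (sparseMat S x).adjugate k l) s) :
    cInvMax (sparseMat S x) ≤ ENNReal.ofReal (S.card * (2 * s)) := by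
  refine iSup₂_le fun k l ↦ ?_
  by_cases hz : ∃ z, (sparseMat S z).adjugate k l ≠ 0
  · refine cInv_le_of_notMem_steepSet (fun _ ↦ matToFun_sparseMat_of_notMem x) (hadj k l hz) hdet
      (fun hmem ↦ hadj_steep k l ?_) (fun hmem ↦ hdet_steep ?_)
    · exact mem_steepSet_comp_extend Subtype.val_injective hs hmem
    · exact mem_steepSet_comp_extend Subtype.val_injective hs hmem
  · push Not at hz
    simp [cInv_sparseMat_eq_zero hz]

lemma Admissible.exists_det_sparseMat_ne_zero (hS : Admissible S) :
    ∃ z, (sparseMat S z).det ≠ 0 := by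
  obtain ⟨B, hB, hdet⟩ := hS
  exact ⟨_, (sparseMat_restrict hB).symm ▸ hdet.ne_zero⟩

lemma Admissible.card_pos [NeZero n] (hS : Admissible S) : 0 < S.card := by
  obtain ⟨B, hB, hdet⟩ := hS
  rw [Finset.card_pos, Finset.nonempty_iff_ne_empty]
  rintro rfl
  have hzero : B = 0 := by
    ext i j
    exact hB i j (Finset.notMem_empty _)
  rw [hzero, Matrix.det_zero] at hdet
  exact not_isUnit_zero hdet

variable {μ : S → Measure ℝ} [∀ p, IsProbabilityMeasure (μ p)]

theorem measure_pi_lt_cInvMax_sparseMat_le [∀ p, NullSingletonClass (μ p)] (hS : Admissible S)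
    {s : ℝ} (hs : 0 ≤ s) {b : ℝ≥0∞} (hb : ∀ p c, μ p {y | s * |y - c| < |y|} ≤ b) :
    Measure.pi μ {x | ENNReal.ofReal (S.card * (2 * s)) < cInvMax (sparseMat S x)}
      ≤ (n ^ 2 + 1) * (S.card * b) := by
  let detSteep : Set (S → ℝ) := steepSet (fun x ↦ (sparseMat S x).det) s
  let adjSteep (q : Fin n × Fin n) : Set (S → ℝ) :=
    steepSet (fun x ↦ (sparseMat S x).adjugate q.1 q.2) s
  have hdetSteep : Measure.pi μ detSteep ≤ S.card * b := by
    simpa using (isMultiaffine_det_sparseMat S).measure_steepSet_le hs hb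
  have hadjSteep (q : Fin n × Fin n) : Measure.pi μ (adjSteep q) ≤ S.card * b := by
    simpa using (isMultiaffine_adjugate_sparseMat S q.1 q.2).measure_steepSet_le hs hb
  have hdet : ∀ᵐ x ∂Measure.pi μ, (sparseMat S x).det ≠ 0 := by
    obtain ⟨z, hz⟩ := hS.exists_det_sparseMat_ne_zero
    exact (isMultiaffine_det_sparseMat S).ae_ne_zero hz
  have hadj : ∀ᵐ x ∂Measure.pi μ, ∀ k l, (∃ z, (sparseMat S z).adjugate k l ≠ 0) →
      (sparseMat S x).adjugate k l ≠ 0 := by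
    refine ae_all_iff.2 fun k ↦ ae_all_iff.2 fun l ↦ ae_all_iff.2 fun ⟨z, hz⟩ ↦ ?_
    exact (isMultiaffine_adjugate_sparseMat S k l).ae_ne_zero hz
  calc Measure.pi μ {x | ENNReal.ofReal (S.card * (2 * s)) < cInvMax (sparseMat S x)}
      ≤ Measure.pi μ ((⋃ q, adjSteep q) ∪ detSteep) := by
        refine measure_mono_ae ?_
        filter_upwards [hdet, hadj] with x hdetx hadjx hlt
        by_contra hx
        change x ∉ (⋃ q, adjSteep q) ∪ detSteep at hx
        simp only [Set.mem_union, Set.mem_iUnion, not_or, not_exists] at hx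
        exact (cInvMax_sparseMat_le hs hdetx hadjx hx.2 fun k l ↦ hx.1 (k, l)).not_gt hlt
    _ ≤ (∑ _q : Fin n × Fin n, S.card * b) + S.card * b :=
        (measure_union_le _ _).trans (add_le_add ((measure_iUnion_fintype_le _ _).trans
          (Finset.sum_le_sum fun q _ ↦ hadjSteep q)) hdetSteep)
    _ = (n ^ 2 + 1) * (S.card * b) := by
        simp only [Finset.sum_const, Finset.card_univ, Fintype.card_prod, Fintype.card_fin,
          nsmul_eq_mul, Nat.cast_mul]
        ring

lemma measurableEmbedding_sparseMat (S : Finset (Fin n × Fin n)) :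
    MeasurableEmbedding (sparseMat S) := by
  have : MeasurableSpace.CountablySeparated (Matrix (Fin n) (Fin n) ℝ) :=
    inferInstanceAs (MeasurableSpace.CountablySeparated (Fin n → Fin n → ℝ))
  refine Measurable.measurableEmbedding ?_ fun x y hxy ↦ funext fun p ↦ ?_
  · refine measurable_pi_iff.2 fun i ↦ measurable_pi_iff.2 fun j ↦ ?_
    by_cases h : (i, j) ∈ S
    · simpa [sparseMat_eq_of_dite, h] using measurable_pi_apply _
    · simp [sparseMat_eq_of_dite, h]
  · rw [← matToFun_sparseMat_coe x p, hxy, matToFun_sparseMat_coe]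

lemma sparseGaussian_eq_map_sparseMat (S : Finset (Fin n × Fin n))
    (Abar : Matrix (Fin n) (Fin n) ℝ) (σ : ℝ) :
    sparseGaussian S Abar σ =
      (Measure.pi fun p : S ↦ gaussianReal (Abar p.1.1 p.1.2) ⟨σ ^ 2, sq_nonneg σ⟩).map
        (sparseMat S) := by
  rw [sparseGaussian, funext (sparseMat_eq_of_dite S)]

end SparseMatrix

theorem prob_cInvMax_gt_general {n : ℕ} {S : Finset (Fin n × Fin n)} (hS : Admissible S)
    {f : S → ℝ → ℝ≥0∞} [∀ p, IsProbabilityMeasure (volume.withDensity (f p))] {K : ℝ≥0∞}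
    (hf : ∀ p y, ‖y‖ₑ * f p y ≤ K) {t : ℝ} (ht : 2 * (S.card : ℝ) < t) :
    (Measure.pi fun p ↦ volume.withDensity (f p)).map (sparseMat S)
        {A | ENNReal.ofReal t < cInvMax A}
      ≤ 2 * K * ENNReal.ofReal (4 * n ^ 2 * S.card ^ 2 / (t - 2 * S.card)) := by
  obtain rfl | hn := eq_or_ne n 0
  · simp [cInvMax]
  have : NeZero n := ⟨hn⟩
  have hcard : (0 : ℝ) < S.card := mod_cast hS.card_pos
  let s : ℝ := t / (2 * S.card)
  have hs : 1 < s := (one_lt_div (by positivity)).2 ht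
  have hts : S.card * (2 * s) = t := by
    simp only [s]
    field_simp
  have hcount : (n ^ 2 + 1 : ℝ≥0∞) ≤ 2 * n ^ 2 := by
    rw [two_mul]
    gcongr
    exact_mod_cast Nat.one_le_pow _ _ (Nat.pos_of_ne_zero hn)
  have hbound : (n : ℝ) ^ 2 * S.card * (2 / (s - 1)) =
      4 * n ^ 2 * S.card ^ 2 / (t - 2 * S.card) := by
    have hs1 : s - 1 ≠ 0 := (sub_pos.2 hs).ne'
    rw [show t - 2 * S.card = 2 * S.card * (s - 1) by rw [← hts]; ring]
    field_simp
    norm_num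
  calc (Measure.pi fun p ↦ volume.withDensity (f p)).map (sparseMat S)
        {A | ENNReal.ofReal t < cInvMax A}
      = Measure.pi (fun p ↦ volume.withDensity (f p))
          {x | ENNReal.ofReal (S.card * (2 * s)) < cInvMax (sparseMat S x)} := by
        rw [(measurableEmbedding_sparseMat S).map_apply, hts, Set.preimage_ofPred_eq]
    _ ≤ (n ^ 2 + 1) * (S.card * (K * ENNReal.ofReal (2 / (s - 1)))) :=
        measure_pi_lt_cInvMax_sparseMat_le hS (by linarith) fun p c ↦
          withDensity_mul_abs_sub_lt_abs_le hs (hf p) c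
    _ ≤ 2 * n ^ 2 * (S.card * (K * ENNReal.ofReal (2 / (s - 1)))) := by gcongr
    _ = 2 * K * ENNReal.ofReal (4 * n ^ 2 * S.card ^ 2 / (t - 2 * S.card)) := by
        rw [← hbound, ENNReal.ofReal_mul (by positivity), ENNReal.ofReal_mul (by positivity),
          ENNReal.ofReal_pow (by positivity), ENNReal.ofReal_natCast, ENNReal.ofReal_natCast]
        ring

/-- Let `S ⊆ [n]²` be admissible, `Ā ∈ M_S` with `‖Ā‖_max ≤ 1`, `σ > 0`
and `A ~ N_S(Ā, σ²Id)`. For every real `t > 2|S|`,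
`Prob{c†(A) > t} ≤ ((1+σ)/σ)·(4n²|S|²/(t−2|S|))·√(2/π)`,
where `c†(A) = max_{k,l} c†_{kl}(A)`. -/
theorem prob_cInvMax_gt {n : ℕ} (S : Finset (Fin n × Fin n)) (hS : Admissible S)
    (Abar : Matrix (Fin n) (Fin n) ℝ) (hsupp : ∀ i j, (i, j) ∉ S → Abar i j = 0)
    (hmax : ∀ i j, |Abar i j| ≤ 1) (σ : ℝ) (hσ : 0 < σ)
    (t : ℝ) (ht : 2 * (S.card : ℝ) < t) :
    sparseGaussian S Abar σ {A | ENNReal.ofReal t < cInvMax A}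
      ≤ ENNReal.ofReal ((1 + σ) / σ
          * (4 * (n : ℝ) ^ 2 * (S.card : ℝ) ^ 2 / (t - 2 * S.card))
          * Real.sqrt (2 / Real.pi)) := by
  let v : NNReal := ⟨σ ^ 2, sq_nonneg σ⟩
  let f (p : S) : ℝ → ℝ≥0∞ := gaussianPDF (Abar p.1.1 p.1.2) v
  have hv : v ≠ 0 := fun h ↦ (pow_pos hσ 2).ne' (congrArg NNReal.toReal h)
  have hlaw (p : S) : gaussianReal (Abar p.1.1 p.1.2) v = volume.withDensity (f p) :=
    gaussianReal_of_var_ne_zero _ hv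
  have (p : S) : IsProbabilityMeasure (volume.withDensity (f p)) := hlaw p ▸ inferInstance
  have hf (p : S) (y : ℝ) :
      ‖y‖ₑ * f p y ≤ ENNReal.ofReal ((1 + σ) / σ * (√(2 * Real.pi))⁻¹) := by
    have hsqrt : √(v : ℝ) = σ := Real.sqrt_sq hσ.le
    have hdens := enorm_mul_gaussianPDF_le (Abar p.1.1 p.1.2) v y
    rw [hsqrt] at hdens
    exact hdens.trans (by gcongr; exact hmax _ _)
  rw [sparseGaussian_eq_map_sparseMat, funext hlaw]
  refine (prob_cInvMax_gt_general hS hf ht).trans_eq ?_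
  rw [← ENNReal.ofReal_ofNat 2, ← ENNReal.ofReal_mul zero_le_two,
    ← ENNReal.ofReal_mul (by positivity), sqrt_two_div_pi]
  ring_nf
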